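/- For every W ∈ (0,1) and all q, q′ ∈ ℤ, the band-limited sampling orthogonality identity holds: Σ_{n∈ℤ} sinc(W(n − q))·sinc(W(n − q′)) = (1/W)·sinc(W(q − q′)). -/

import Mathlib

open scoped BigOperators

/-- normalized sinc: sinc(x) = sin(πx)/(πx) for x ≠ 0, sinc(0) = 1. -/
noncomputable def sinc (x : ℝ) : ℝ :=
  if x = 0 then 1 else Real.sin (Real.pi * x) / (Real.pi * x)

/-!
For `0 < W ≤ 1` the band `(-W/2, W/2]` fits inside one period `(-1/2, 1/2]`. On that period the
function equal to `x ↦ exp (2πiax)` on the band and to `0` off it has `n`-th Fourier coefficient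
`W * sinc (W * (a - n))`, and the inner product of two such functions, with parameters `a` and `b`,
is `W * sinc (W * (b - a))`. Parseval's identity for inner products compares the two.
-/

open MeasureTheory AddCircle Set
open scoped Real FourierTransform ComplexConjugate ENNReal

theorem hasSum_conj_fourierCoeff_mul {T : ℝ} [Fact (0 < T)]
    (f g : Lp ℂ 2 (haarAddCircle (T := T))) :
    HasSum (fun n ↦ conj (fourierCoeff f n) * fourierCoeff g n)
      (∫ t, conj (f t) * g t ∂haarAddCircle) := by
  have h := fourierBasis.hasSum_inner_mul_inner f g
  simpa only [← fourierBasis_repr, HilbertBasis.repr_apply_apply, inner_conj_symm,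
    L2.inner_def f g, RCLike.inner_apply'] using h

theorem hasSum_conj_fourierCoeffOn_mul {a b : ℝ} {f g : ℝ → ℂ} (hab : a < b)
    (hf : MemLp f 2 (volume.restrict (Ioc a b))) (hg : MemLp g 2 (volume.restrict (Ioc a b))) :
    HasSum (fun n ↦ conj (fourierCoeffOn hab f n) * fourierCoeffOn hab g n)
      ((b - a)⁻¹ • ∫ x in a..b, conj (f x) * g x) := by
  have : Fact (0 < b - a) := ⟨sub_pos.mpr hab⟩
  rw [← add_sub_cancel a b] at hf hg
  have hf' := hf.memLp_liftIoc.haarAddCircle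
  have hg' := hg.memLp_liftIoc.haarAddCircle
  have inner_eq : (∫ t, conj (hf'.toLp _ t) * hg'.toLp _ t ∂haarAddCircle) =
      (b - a)⁻¹ • ∫ x in a..b, conj (f x) * g x := calc
    _ = ∫ t, liftIoc (b - a) a (fun x ↦ conj (f x) * g x) t ∂haarAddCircle := by
      apply integral_congr_ae
      filter_upwards [hf'.coeFn_toLp, hg'.coeFn_toLp] with t hft hgt
      rw [hft, hgt]
      rfl
    _ = (b - a)⁻¹ • ∫ x in a..b, conj (f x) * g x := by
      rw [integral_haarAddCircle, integral_liftIoc_eq_intervalIntegral, add_sub_cancel]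
  rw [← inner_eq]
  simpa only [fourierCoeffOn, fourierCoeff_congr_ae hf'.coeFn_toLp,
    fourierCoeff_congr_ae hg'.coeFn_toLp]
    using hasSum_conj_fourierCoeff_mul (hf'.toLp _) (hg'.toLp _)

theorem sinc_eq_real_sinc (x : ℝ) : sinc x = Real.sinc (π * x) := by
  simp [sinc, Real.sinc, Real.pi_ne_zero]

theorem sinc_mul_sub_comm (c x y : ℝ) : sinc (c * (x - y)) = sinc (c * (y - x)) := by
  rw [sinc_eq_real_sinc, sinc_eq_real_sinc, ← Real.sinc_neg]
  congr 1
  ring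

theorem integral_fourierChar_mul_eq_sinc (W a : ℝ) :
    ∫ x in -(W / 2)..W / 2, (𝐞 (a * x) : ℂ) = W * sinc (W * a) := by
  rcases eq_or_ne a 0 with rfl | ha
  · simp [sinc]
  have hπa : 2 * π * a ≠ 0 := by positivity
  calc ∫ x in -(W / 2)..W / 2, (𝐞 (a * x) : ℂ)
      = ∫ x in -(W / 2)..W / 2, Complex.exp ((2 * π * a * x : ℝ) * Complex.I) := by
        simp only [Real.fourierChar_apply, mul_assoc]
    _ = (2 * π * a)⁻¹ • ∫ t in -(π * (W * a))..π * (W * a), Complex.exp (t * Complex.I) := by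
        rw [intervalIntegral.integral_comp_mul_left
          (fun t : ℝ ↦ Complex.exp (t * Complex.I)) hπa]
        ring_nf
    _ = W * sinc (W * a) := by
        rw [integral_exp_mul_I_eq_sinc, sinc_eq_real_sinc, Complex.real_smul]
        have : (a : ℂ) ≠ 0 := mod_cast ha
        have : (π : ℂ) ≠ 0 := mod_cast Real.pi_ne_zero
        push_cast
        field

/-- The character `x ↦ exp (2πiax)` cut off to the frequency band `(-W/2, W/2]`, whose Fourier
coefficients on a period containing the band are samples of `sinc`. The shift `a` is real, and the
band is half-open to match the intervals of `fourierCoeffOn`. -/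
noncomputable def bandChar (W a : ℝ) : ℝ → ℂ :=
  (Ioc (-(W / 2)) (W / 2)).indicator fun x ↦ (𝐞 (a * x) : ℂ)

namespace bandChar

theorem memLp (W a : ℝ) (p : ℝ≥0∞) (μ : Measure ℝ) [IsFiniteMeasure μ] :
    MemLp (bandChar W a) p μ := by
  have hcont : Continuous fun x : ℝ ↦ (𝐞 (a * x) : ℂ) := by fun_prop
  exact (MemLp.of_bound hcont.aestronglyMeasurable 1
    (.of_forall fun _ ↦ (Circle.norm_coe _).le)).indicator measurableSet_Ioc

theorem fourierChar_mul (W a c x : ℝ) :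
    𝐞 (c * x) * bandChar W a x = bandChar W (c + a) x := by
  simp only [bandChar, ← indicator_mul_right _ fun x : ℝ ↦ (𝐞 (c * x) : ℂ), ← Circle.coe_mul,
    ← AddChar.map_add_eq_mul, ← add_mul]

theorem conj_mul (W a b x : ℝ) :
    conj (bandChar W a x) * bandChar W b x = bandChar W (b - a) x := by
  by_cases hx : x ∈ Ioc (-(W / 2)) (W / 2)
  · simp only [bandChar, indicator_of_mem hx, ← Circle.coe_inv_eq_conj, ← Circle.coe_mul,
      ← AddChar.map_neg_eq_inv, ← AddChar.map_add_eq_mul]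
    ring_nf
  · simp only [bandChar, indicator_of_notMem hx, mul_zero]

theorem integral_eq_sinc {W c d : ℝ} (hW : 0 ≤ W) (hc : c ≤ -(W / 2)) (hd : W / 2 ≤ d)
    (a : ℝ) : ∫ x in c..d, bandChar W a x = W * sinc (W * a) := by
  rw [← integral_fourierChar_mul_eq_sinc, intervalIntegral.integral_of_le (by linarith),
    intervalIntegral.integral_of_le (by linarith), bandChar,
    setIntegral_indicator measurableSet_Ioc, inter_eq_self_of_subset_right (Ioc_subset_Ioc hc hd)]

theorem fourierCoeffOn_eq_sinc {W c d : ℝ} (hcd : c < d) (hW : 0 ≤ W) (hc : c ≤ -(W / 2))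
    (hd : W / 2 ≤ d) (a : ℝ) (n : ℤ) :
    fourierCoeffOn hcd (bandChar W a) n = (d - c)⁻¹ * (W * sinc (W * (a - n / (d - c)))) := by
  have fourier_smul_eq (x : ℝ) :
      fourier (-n) (x : AddCircle (d - c)) • bandChar W a x = bandChar W (a - n / (d - c)) x := by
    rw [sub_eq_neg_add a, ← fourierChar_mul, fourier_coe_apply, Real.fourierChar_apply, smul_eq_mul]
    push_cast
    ring_nf
  rw [fourierCoeffOn_eq_integral]
  simp only [fourier_smul_eq]
  rw [integral_eq_sinc hW hc hd, Complex.real_smul]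
  push_cast
  rw [one_div]

end bandChar

theorem sinc_sampling_orthogonality_general {W : ℝ} (hW : W ∈ Ioc (0 : ℝ) 1) (a b : ℝ) :
    HasSum (fun n : ℤ ↦ sinc (W * (n - a)) * sinc (W * (n - b))) (1 / W * sinc (W * (a - b))) := by
  have hW₀ : W ≠ 0 := hW.1.ne'
  have period : (1 / 2 - -(1 / 2) : ℝ) = 1 := by norm_num
  have left_le : -(1 / 2) ≤ -(W / 2) := by linarith [hW.2]
  have le_right : W / 2 ≤ 1 / 2 := by linarith [hW.2]
  have parseval := hasSum_conj_fourierCoeffOn_mul (a := -(1 / 2)) (b := 1 / 2) (by norm_num)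
    (bandChar.memLp W a 2 _) (bandChar.memLp W b 2 _)
  simp only [bandChar.fourierCoeffOn_eq_sinc _ hW.1.le left_le le_right, bandChar.conj_mul,
    bandChar.integral_eq_sinc hW.1.le left_le le_right, period] at parseval
  have scaled : HasSum (fun n : ℤ ↦ W * sinc (W * (n - a)) * (W * sinc (W * (n - b))))
      (W * sinc (W * (a - b))) := by
    rw [← Complex.hasSum_ofReal]
    convert parseval using 1
    · ext n
      simp [sinc_mul_sub_comm W n]
    · simp [sinc_mul_sub_comm W a]
  have unscale : W⁻¹ ^ 2 * (W * sinc (W * (a - b))) = 1 / W * sinc (W * (a - b)) := by field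
  rw [← unscale]
  exact (scaled.mul_left (W⁻¹ ^ 2)).congr_fun fun n ↦ by field

/-- band-limited sampling orthogonality identity. -/
theorem sinc_sampling_orthogonality
    (W : ℝ) (hW : W ∈ Set.Ioo (0 : ℝ) 1) (q q' : ℤ) :
    ∑' n : ℤ, sinc (W * ((n : ℝ) - (q : ℝ))) * sinc (W * ((n : ℝ) - (q' : ℝ)))
      = (1 / W) * sinc (W * ((q : ℝ) - (q' : ℝ))) :=
  (sinc_sampling_orthogonality_general (Ioo_subset_Ioc_self hW) q q').tsum_eq
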